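/- The second Leibniz cohomology group of the twisted Schrödinger-Virasoro algebra L is one-dimensional: every Leibniz 2-cocycle ψ on L is equivalent (modulo Leibniz 2-coboundaries ψ_f(x,y) = f([x,y])) to a scalar multiple of the Virasoro cocycle φ determined by φ(L_n, L_m) = ((n³−n)/12)·δ_{m,−n} and φ vanishing on all other pairs of basis elements. -/

import Mathlib

/-!
The element `L_0` acts diagonally, so the cocycle identity on `(x_a, L_0, z_b)`, with `x_a`, `z_b`
homogeneous of degrees `a`, `b`, reads `(a + b) ψ(x_a, z_b) = -ψ([x_a, z_b], L_0)`.  Hence, up to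
the coboundary of the functional `w ↦ -ψ(w, L_0) / deg w`, a cocycle is supported on pairs of total
degree `0`.  The values of the functional at `L_0`, `Y_0`, `M_0` remain free and are used to make
the cocycle vanish on `(L_1, L_{-1})`, `(L_1, Y_{-1})`, `(L_1, M_{-1})` (`exists_normalized`).

For such a normalized cocycle `χ` each pair of generator families gives a sequence
`n ↦ χ(A_n, B_{-n})`, and the cocycle identity becomes a system of linear recurrences.
The `L`-`L` sequence is odd and determined by its values at `1` and `2`, hence proportional to
`n³ - n` (`seqLL`).  The `L`-`Y` sequence vanishes (`seqLY`).  The recurrences coming from `L` and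
`M` alone also allow `χ(L_n, M_{-n}) = n² - n`; the identities involving two `Y`'s force this
sequence to be odd, which excludes it and makes the `Y`-`Y` sequence vanish as well (`seqLM`).
The `Y`-`M` and `M`-`M` sequences vanish for elementary reasons.

Finally a coboundary takes the values `-2 f(L_0)` and `-4 f(L_0)` on `(L_1, L_{-1})` and
`(L_2, L_{-2})`, while `vir` takes the values `0` and `1/2`.
-/



abbrev B : Type := ℤ ⊕ ℤ ⊕ ℤ
abbrev V : Type := B →₀ ℂ

noncomputable def Lg (n : ℤ) : V := Finsupp.single (Sum.inl n) 1
noncomputable def Yg (n : ℤ) : V := Finsupp.single (Sum.inr (Sum.inl n)) 1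
noncomputable def Mg (n : ℤ) : V := Finsupp.single (Sum.inr (Sum.inr n)) 1

/-- Bracket on basis elements of the twisted Schrödinger–Virasoro algebra. -/
noncomputable def brB : B → B → V
  | Sum.inl n, Sum.inl m => ((m : ℂ) - n) • Lg (n + m)
  | Sum.inl n, Sum.inr (Sum.inl m) => ((m : ℂ) - n / 2) • Yg (n + m)
  | Sum.inl n, Sum.inr (Sum.inr p) => (p : ℂ) • Mg (n + p)
  | Sum.inr (Sum.inl m), Sum.inl n => -(((m : ℂ) - n / 2) • Yg (n + m))
  | Sum.inr (Sum.inr p), Sum.inl n => -((p : ℂ) • Mg (n + p))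
  | Sum.inr (Sum.inl m), Sum.inr (Sum.inl m') => ((m' : ℂ) - m) • Mg (m + m')
  | _, _ => 0

/-- The bilinear extension of the bracket to the whole space. -/
noncomputable def bk : V →ₗ[ℂ] V →ₗ[ℂ] V :=
  Finsupp.lsum ℂ fun a => LinearMap.toSpanSingleton ℂ (V →ₗ[ℂ] V)
    (Finsupp.lsum ℂ fun b => LinearMap.toSpanSingleton ℂ V (brB a b))

/-- `φ` is a Leibniz 2-cocycle on the twisted Schrödinger–Virasoro algebra. -/
def IsLeibnizCocycle (φ : V →ₗ[ℂ] V →ₗ[ℂ] ℂ) : Prop :=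
  ∀ x y z : V, φ x (bk y z) = φ (bk x y) z - φ (bk x z) y

/-- The Virasoro Leibniz cocycle on basis elements. -/
noncomputable def virB : B → B → ℂ
  | Sum.inl n, Sum.inl m => if m = -n then ((n : ℂ) ^ 3 - n) / 12 else 0
  | _, _ => 0

/-- The bilinear extension of the Virasoro cocycle. -/
noncomputable def vir : V →ₗ[ℂ] V →ₗ[ℂ] ℂ :=
  Finsupp.lsum ℂ fun a => LinearMap.toSpanSingleton ℂ (V →ₗ[ℂ] ℂ)
    (Finsupp.lsum ℂ fun b => LinearMap.toSpanSingleton ℂ ℂ (virB a b))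

/-! ### Brackets of basis elements -/

/-- The basis vector indexed by `b`. -/
noncomputable def basisVec (b : B) : V := Finsupp.single b 1

/-- The degree of a basis element, that is, its eigenvalue under `[L_0, ·]`. -/
def deg : B → ℤ
  | Sum.inl n => n
  | Sum.inr (Sum.inl n) => n
  | Sum.inr (Sum.inr n) => n

lemma bk_basis (a b : B) : bk (basisVec a) (basisVec b) = brB a b := by
  simp [bk, basisVec]

lemma vir_basis (a b : B) : vir (basisVec a) (basisVec b) = virB a b := by
  simp [vir, basisVec]

lemma bk_LL (n m : ℤ) : bk (Lg n) (Lg m) = ((m : ℂ) - n) • Lg (n + m) := bk_basis _ _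
lemma bk_LY (n m : ℤ) : bk (Lg n) (Yg m) = ((m : ℂ) - n / 2) • Yg (n + m) := bk_basis _ _
lemma bk_LM (n m : ℤ) : bk (Lg n) (Mg m) = (m : ℂ) • Mg (n + m) := bk_basis _ _
lemma bk_YL (m n : ℤ) : bk (Yg m) (Lg n) = -(((m : ℂ) - n / 2) • Yg (n + m)) := bk_basis _ _
lemma bk_ML (m n : ℤ) : bk (Mg m) (Lg n) = -((m : ℂ) • Mg (n + m)) := bk_basis _ _
lemma bk_YY (n m : ℤ) : bk (Yg n) (Yg m) = ((m : ℂ) - n) • Mg (n + m) := bk_basis _ _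
lemma bk_YM (n m : ℤ) : bk (Yg n) (Mg m) = 0 := bk_basis _ _
lemma bk_MY (n m : ℤ) : bk (Mg n) (Yg m) = 0 := bk_basis _ _
lemma bk_MM (n m : ℤ) : bk (Mg n) (Mg m) = 0 := bk_basis _ _

lemma basisVec_L (n : ℤ) : basisVec (Sum.inl n) = Lg n := rfl
lemma basisVec_Y (n : ℤ) : basisVec (Sum.inr (Sum.inl n)) = Yg n := rfl
lemma basisVec_M (n : ℤ) : basisVec (Sum.inr (Sum.inr n)) = Mg n := rfl

lemma bk_L0_left (b : B) : bk (Lg 0) (basisVec b) = (deg b : ℂ) • basisVec b := by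
  rcases b with n | n | n <;>
    simp [basisVec_L, basisVec_Y, basisVec_M, bk_LL, bk_LY, bk_LM, deg]

lemma bk_L0_right (b : B) : bk (basisVec b) (Lg 0) = -((deg b : ℂ) • basisVec b) := by
  rcases b with n | n | n <;>
    simp [basisVec_L, basisVec_Y, basisVec_M, bk_LL, bk_YL, bk_ML, deg]

lemma trilinear_ext {W : Type*} [AddCommGroup W] [Module ℂ W] {F G : V →ₗ[ℂ] V →ₗ[ℂ] V →ₗ[ℂ] W}
    (h : ∀ a b c : B, F (basisVec a) (basisVec b) (basisVec c)
      = G (basisVec a) (basisVec b) (basisVec c)) : F = G := by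
  refine Finsupp.lhom_ext' fun a => LinearMap.ext_ring ?_
  refine Finsupp.lhom_ext' fun b => LinearMap.ext_ring ?_
  refine Finsupp.lhom_ext' fun c => LinearMap.ext_ring ?_
  exact h a b c

lemma bilinear_ext {F G : V →ₗ[ℂ] V →ₗ[ℂ] ℂ}
    (h : ∀ a b : B, F (basisVec a) (basisVec b) = G (basisVec a) (basisVec b)) : F = G := by
  refine Finsupp.lhom_ext' fun a => LinearMap.ext_ring ?_
  refine Finsupp.lhom_ext' fun b => LinearMap.ext_ring ?_
  exact h a b

lemma leibniz_basis (a b c : B) :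
    bk (basisVec a) (bk (basisVec b) (basisVec c))
      = bk (bk (basisVec a) (basisVec b)) (basisVec c)
        - bk (bk (basisVec a) (basisVec c)) (basisVec b) := by
  -- In each case both sides are multiples of one basis vector; only the indices need aligning.
  rcases a with a | a | a <;> rcases b with b | b | b <;> rcases c with c | c | c <;>
    simp only [basisVec_L, basisVec_Y, basisVec_M, bk_LL, bk_LY, bk_LM, bk_YL, bk_ML, bk_YY, bk_YM,
      bk_MY, bk_MM, map_smul, map_neg, map_zero, LinearMap.smul_apply, LinearMap.neg_apply,
      LinearMap.zero_apply, smul_zero, neg_zero, sub_zero, smul_neg, neg_neg,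
      add_comm, add_left_comm] <;>
    push_cast <;> module

/-- The bracket satisfies the Leibniz form of the Jacobi identity. -/
lemma leibniz (x y z : V) : bk x (bk y z) = bk (bk x y) z - bk (bk x z) y := by
  let F : V →ₗ[ℂ] V →ₗ[ℂ] V →ₗ[ℂ] V :=
    LinearMap.mk₂ ℂ (fun x y => (bk x).comp (bk y))
      (by intros; ext; simp) (by intros; ext; simp) (by intros; ext; simp) (by intros; ext; simp)
  let G : V →ₗ[ℂ] V →ₗ[ℂ] V →ₗ[ℂ] V :=
    LinearMap.mk₂ ℂ (fun x y => bk (bk x y) - (bk.flip y).comp (bk x))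
      (by intros; refine LinearMap.ext fun _ => ?_; simp; abel)
      (by intros; refine LinearMap.ext fun _ => ?_; simp [smul_sub])
      (by intros; refine LinearMap.ext fun _ => ?_; simp; abel)
      (by intros; refine LinearMap.ext fun _ => ?_; simp [smul_sub])
  have h : F = G := trilinear_ext fun a b c => by simpa [F, G] using leibniz_basis a b c
  simpa [F, G] using congrArg (fun H => H x y z) h

lemma IsLeibnizCocycle.sub_coboundary {ψ : V →ₗ[ℂ] V →ₗ[ℂ] ℂ} (h : IsLeibnizCocycle ψ)
    (f : V →ₗ[ℂ] ℂ) : IsLeibnizCocycle (ψ - bk.compr₂ f) := by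
  intro x y z
  simp only [LinearMap.sub_apply, LinearMap.compr₂_apply, h x y z, leibniz x y z, map_sub]
  ring

/-! ### Reduction to total degree zero -/

lemma deg_smul_eq {ψ : V →ₗ[ℂ] V →ₗ[ℂ] ℂ} (h : IsLeibnizCocycle ψ) (a b : B) :
    ((deg a : ℂ) + deg b) * ψ (basisVec a) (basisVec b)
      = -ψ (bk (basisVec a) (basisVec b)) (Lg 0) := by
  have e := h (basisVec a) (Lg 0) (basisVec b)
  simp only [bk_L0_left, bk_L0_right, map_smul, map_neg, LinearMap.smul_apply,
    LinearMap.neg_apply, smul_eq_mul] at e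
  linear_combination e

/-- A cocycle vanishing against `L_0` on the right and on the three pairs that fix the functional
in degree zero.  Every cocycle is cohomologous to one of these. -/
structure Normalized (χ : V →ₗ[ℂ] V →ₗ[ℂ] ℂ) : Prop where
  cocycle : IsLeibnizCocycle χ
  L0_right : ∀ b : B, χ (basisVec b) (Lg 0) = 0
  L_one : χ (Lg 1) (Lg (-1)) = 0
  Y_one : χ (Lg 1) (Yg (-1)) = 0
  M_one : χ (Lg 1) (Mg (-1)) = 0

/-- A cocycle vanishes on every `(w, L_0)` with `w` of degree `0`, since each such `w` is a
multiple of some `[L_1, w']`. -/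
lemma right_L0_of_deg_zero {ψ : V →ₗ[ℂ] V →ₗ[ℂ] ℂ} (h : IsLeibnizCocycle ψ) (b : B)
    (hb : deg b = 0) : ψ (basisVec b) (Lg 0) = 0 := by
  rcases b with n | n | n <;> obtain rfl : n = 0 := hb
  · have e := deg_smul_eq h (Sum.inl 1) (Sum.inl (-1))
    simp only [basisVec_L, bk_LL, deg, map_smul, LinearMap.smul_apply, smul_eq_mul] at e ⊢
    norm_num at e
    exact e
  · have e := deg_smul_eq h (Sum.inl 1) (Sum.inr (Sum.inl (-1)))
    simp only [basisVec_L, basisVec_Y, bk_LY, deg, map_smul, LinearMap.smul_apply,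
      smul_eq_mul] at e ⊢
    norm_num at e
    exact e
  · have e := deg_smul_eq h (Sum.inl 1) (Sum.inr (Sum.inr (-1)))
    simp only [basisVec_L, basisVec_M, bk_LM, deg, map_smul, LinearMap.smul_apply,
      smul_eq_mul] at e ⊢
    norm_num at e
    exact e.symm

/-- The values on basis elements of the functional whose coboundary normalizes `ψ`. -/
noncomputable def normFun (ψ : V →ₗ[ℂ] V →ₗ[ℂ] ℂ) (b : B) : ℂ :=
  if deg b = 0 then
    match b with
    | Sum.inl _ => -ψ (Lg 1) (Lg (-1)) / 2
    | Sum.inr (Sum.inl _) => -2 * ψ (Lg 1) (Yg (-1)) / 3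
    | Sum.inr (Sum.inr _) => -ψ (Lg 1) (Mg (-1))
  else -ψ (basisVec b) (Lg 0) / deg b

lemma exists_normalized {ψ : V →ₗ[ℂ] V →ₗ[ℂ] ℂ} (h : IsLeibnizCocycle ψ) :
    ∃ f : V →ₗ[ℂ] ℂ, Normalized (ψ - bk.compr₂ f) := by
  let f : V →ₗ[ℂ] ℂ := Finsupp.linearCombination ℂ (normFun ψ)
  have hf : ∀ b, f (basisVec b) = normFun ψ b := fun b => by simp [f, basisVec]
  have hL : f (Lg 0) = -ψ (Lg 1) (Lg (-1)) / 2 := by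
    rw [← basisVec_L, hf]; simp [normFun, deg]
  have hY : f (Yg 0) = -2 * ψ (Lg 1) (Yg (-1)) / 3 := by
    rw [← basisVec_Y, hf]; simp [normFun, deg]
  have hM : f (Mg 0) = -ψ (Lg 1) (Mg (-1)) := by
    rw [← basisVec_M, hf]; simp [normFun, deg]
  refine ⟨f, h.sub_coboundary f, fun b => ?_, ?_, ?_, ?_⟩
  · simp only [LinearMap.sub_apply, LinearMap.compr₂_apply, bk_L0_right, map_neg, map_smul, hf,
      smul_eq_mul]
    by_cases hb : deg b = 0
    · simp [right_L0_of_deg_zero h b hb, hb]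
    · have hb' : (deg b : ℂ) ≠ 0 := by exact_mod_cast hb
      simp only [normFun, hb, if_false]
      field_simp
      ring
  · simp only [LinearMap.sub_apply, LinearMap.compr₂_apply, bk_LL, map_smul, smul_eq_mul,
      Int.reduceNeg, Int.reduceAdd, hL]
    push_cast
    ring
  · simp only [LinearMap.sub_apply, LinearMap.compr₂_apply, bk_LY, map_smul, smul_eq_mul,
      Int.reduceNeg, Int.reduceAdd, hY]
    push_cast
    ring
  · simp only [LinearMap.sub_apply, LinearMap.compr₂_apply, bk_LM, map_smul, smul_eq_mul,
      Int.reduceNeg, Int.reduceAdd, hM]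
    push_cast
    ring

lemma Normalized.eq_zero_of_deg {χ : V →ₗ[ℂ] V →ₗ[ℂ] ℂ} (h : Normalized χ) (a b : B)
    (hab : deg a + deg b ≠ 0) : χ (basisVec a) (basisVec b) = 0 := by
  have h0 : χ.flip (Lg 0) = 0 :=
    Finsupp.lhom_ext' fun b => LinearMap.ext_ring (h.L0_right b)
  have e := deg_smul_eq h.cocycle a b
  rw [← LinearMap.flip_apply (m := bk _ _), h0, LinearMap.zero_apply, neg_zero] at e
  have hab' : (deg a : ℂ) + deg b ≠ 0 := by exact_mod_cast hab
  exact (mul_eq_zero.mp e).resolve_left hab'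

/-! ### Linear recurrences on sequences indexed by the integers -/

/-- Stated from `2` on, since the coefficient `a - 1` loses the information at `a = 1`. -/
lemma eq_zero_of_rec {q k : ℤ → ℂ} (h2 : q 2 = 0)
    (hrec : ∀ a : ℤ, ((a : ℂ) - 1) * q (a + 1) = k a * q a) (n : ℤ) (hn : 2 ≤ n) : q n = 0 := by
  induction n, hn using Int.leInduction with
  | base => exact h2
  | succ a ha ih =>
    have ha' : (a : ℂ) - 1 ≠ 0 := by
      rw [sub_ne_zero]
      exact_mod_cast (by lia : a ≠ 1)
    have e := hrec a
    rw [ih, mul_zero] at e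
    exact (mul_eq_zero.mp e).resolve_left ha'

lemma eq_zero_of_odd {q : ℤ → ℂ} (hodd : ∀ n, q (-n) = -q n) (h1 : q 1 = 0)
    (hpos : ∀ n, 2 ≤ n → q n = 0) (n : ℤ) : q n = 0 := by
  have h0 : q 0 = 0 := by
    have e := hodd 0
    rw [neg_zero] at e
    linear_combination e / 2
  have hnn : ∀ n, 0 ≤ n → q n = 0 := fun n hn => by
    obtain rfl | rfl | hn : n = 0 ∨ n = 1 ∨ 2 ≤ n := by lia
    exacts [h0, h1, hpos n hn]
  obtain hn | hn := le_total 0 n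
  · exact hnn n hn
  · rw [← neg_neg n, hodd, hnn (-n) (by lia), neg_zero]

lemma intCast_ne {n : ℤ} (hn : n ≠ 0) : (n : ℂ) ≠ 0 := by exact_mod_cast hn

/-- Here `p n` stands for the value on `(L_n, L_{-n})`. -/
lemma seqLL {p : ℤ → ℂ} (h1 : p 1 = 0)
    (h : ∀ a b : ℤ, (-(a : ℂ) - 2 * b) * p a = (b - a) * p (a + b) + (2 * a + b) * p (-b)) (n : ℤ) :
    p n = p 2 / 6 * ((n : ℂ) ^ 3 - n) := by
  have h0 : p 0 = 0 := by
    have e := h 1 0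
    norm_num at e
    exact e
  have hodd : ∀ n, p (-n) = -p n := fun n => by
    by_cases hn : n = 0
    · simp [hn, h0]
    have e := h 0 n
    rw [h0, zero_add] at e
    apply mul_left_cancel₀ (intCast_ne hn)
    push_cast at e
    linear_combination -e
  -- The difference with the expected cubic solves the same recurrence and vanishes at 1 and 2.
  have key : ∀ n, (fun n : ℤ => p n - p 2 / 6 * ((n : ℂ) ^ 3 - n)) n = 0 := by
    refine eq_zero_of_odd (fun n => ?_) ?_
      (eq_zero_of_rec (k := fun a => (a : ℂ) + 2) ?_ fun a => ?_)
    · rw [hodd]; push_cast; ring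
    · simp [h1]
    · push_cast; ring
    · have e := h a 1
      rw [hodd 1, h1] at e
      push_cast at e ⊢
      linear_combination e
  linear_combination key n

/-- Here `r n` and `s n` stand for the values on `(L_n, Y_{-n})` and `(Y_n, L_{-n})`. -/
lemma seqLY {r s : ℤ → ℂ} (h1 : r 1 = 0)
    (h : ∀ a b : ℤ, (-(a : ℂ) - 3 * b / 2) * r a
      = (b - a) * r (a + b) + (3 * a / 2 + b) * s (-b))
    (h' : ∀ b : ℤ, -2 * (b : ℂ) * s 0 = b / 2 * s b + b / 2 * s (-b)) (n : ℤ) :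
    r n = 0 ∧ s n = 0 := by
  have s0 : s 0 = 0 := by
    have e := h 1 0
    norm_num at e
    exact e
  have sodd : ∀ n, s (-n) = -s n := fun n => by
    by_cases hn : n = 0
    · simp [hn, s0]
    have e := h' n
    rw [s0] at e
    apply mul_left_cancel₀ (intCast_ne hn)
    linear_combination -2 * e
  have r0 : r 0 = 0 := by
    have e1 := h 0 1
    have e2 := h 1 (-1)
    rw [sodd] at e1
    norm_num at e1 e2
    linear_combination (4 / 5 : ℂ) * e2 + 2 / 5 * e1
  have hrs : ∀ n, r n = s n := fun n => by
    by_cases hn : n = 0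
    · simp [hn, r0, s0]
    have e := h 0 n
    rw [r0, zero_add, sodd] at e
    apply mul_left_cancel₀ (intCast_ne hn)
    push_cast at e
    linear_combination -e
  have rodd : ∀ n, r (-n) = -r n := fun n => by rw [hrs, hrs, sodd]
  have hr : ∀ n, r n = 0 := by
    refine eq_zero_of_odd rodd h1
      (eq_zero_of_rec (k := fun a => (a : ℂ) + 3 / 2) ?_ fun a => ?_)
    · have e := h 2 (-1)
      rw [← hrs] at e
      norm_num [h1] at e
      exact e
    · have e := h a 1
      rw [← hrs, rodd, h1] at e
      push_cast at e ⊢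
      linear_combination e
  exact ⟨hr n, hrs n ▸ hr n⟩

/-- Here `u n`, `v n`, `g n` stand for the values on `(L_n, M_{-n})`, `(M_n, L_{-n})` and
`(Y_n, Y_{-n})`.  Hypotheses `h1` and `h` alone allow `u n = n ^ 2 - n`; `hg` forces `u` to be
odd. -/
lemma seqLM {u v g : ℤ → ℂ} (h1 : u 1 = 0)
    (h : ∀ a b : ℤ, -((a : ℂ) + b) * u a = (b - a) * u (a + b) + (a + b) * v (-b))
    (hg : ∀ a b : ℤ, -((a : ℂ) + 3 * b / 2) * g a
      = -(a - b / 2) * g (a + b) + (2 * a + b) * v (-b)) (n : ℤ) :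
    u n = 0 ∧ v n = 0 ∧ g n = 0 := by
  have u0 : u 0 = 0 := by
    have e := h 1 (-1)
    norm_num at e
    exact e
  have v0 : v 0 = 0 := by
    have e := h 1 0
    norm_num at e
    exact e
  have huv : ∀ n, v (-n) = -u n := fun n => by
    by_cases hn : n = 0
    · simp [hn, u0, v0]
    have e := h 0 n
    rw [u0, zero_add] at e
    apply mul_left_cancel₀ (intCast_ne hn)
    push_cast at e
    linear_combination -e
  have gpos : ∀ n, n ≠ 0 → g n = -3 * g 0 + 2 * u n := fun n hn => by
    have e := hg 0 n
    rw [huv, zero_add] at e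
    apply mul_left_cancel₀ (intCast_ne hn)
    push_cast at e
    linear_combination -2 * e
  have uodd : ∀ n, u (-n) = -u n := fun n => by
    by_cases hn : n = 0
    · simp [hn, u0]
    have e := hg (-n) n
    rw [huv, neg_add_cancel, gpos (-n) (by lia)] at e
    apply mul_left_cancel₀ (intCast_ne hn)
    push_cast at e
    linear_combination -e
  have hu : ∀ n, u n = 0 := by
    refine eq_zero_of_odd uodd h1 (eq_zero_of_rec (k := fun a => (a : ℂ) + 1) ?_ fun a => ?_)
    · have e := h 2 (-1)
      rw [huv, uodd, h1] at e
      norm_num [h1] at e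
      exact e
    · have e := h a 1
      rw [huv, h1] at e
      push_cast at e ⊢
      linear_combination e
  have g0 : g 0 = 0 := by
    have e := hg 1 1
    rw [huv, h1, gpos 1 (by lia), gpos (1 + 1) (by lia), hu, hu] at e
    push_cast at e
    linear_combination e / 6
  refine ⟨hu n, ?_, ?_⟩
  · rw [← neg_neg n, huv, hu, neg_zero]
  · by_cases hn : n = 0
    · rw [hn, g0]
    · rw [gpos n hn, g0, hu]; ring

/-! ### Normalized cocycles -/

namespace Normalized

variable {χ : V →ₗ[ℂ] V →ₗ[ℂ] ℂ}

lemma val_LL (h : Normalized χ) (n : ℤ) :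
    χ (Lg n) (Lg (-n)) = χ (Lg 2) (Lg (-2)) / 6 * ((n : ℂ) ^ 3 - n) := by
  refine seqLL (p := fun n => χ (Lg n) (Lg (-n))) h.L_one (fun a b => ?_) n
  have e := h.cocycle (Lg a) (Lg b) (Lg (-a - b))
  simp only [bk_LL, map_smul, LinearMap.smul_apply, smul_eq_mul] at e
  rw [show b + (-a - b) = -a by ring, show a + (-a - b) = -b by ring] at e
  rw [neg_neg, show -(a + b) = -a - b by ring]
  push_cast at e
  linear_combination e

lemma val_LY (h : Normalized χ) (n : ℤ) :
    χ (Lg n) (Yg (-n)) = 0 ∧ χ (Yg n) (Lg (-n)) = 0 := by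
  refine seqLY (r := fun n => χ (Lg n) (Yg (-n))) (s := fun n => χ (Yg n) (Lg (-n)))
    h.Y_one (fun a b => ?_) (fun b => ?_) n
  · have e := h.cocycle (Lg a) (Lg b) (Yg (-a - b))
    simp only [bk_LL, bk_LY, map_smul, LinearMap.smul_apply, smul_eq_mul] at e
    rw [show b + (-a - b) = -a by ring, show a + (-a - b) = -b by ring] at e
    rw [neg_neg, show -(a + b) = -a - b by ring]
    push_cast at e
    linear_combination e
  · have e := h.cocycle (Yg 0) (Lg b) (Lg (-b))
    simp only [bk_LL, bk_YL, map_smul, map_neg, LinearMap.smul_apply, LinearMap.neg_apply,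
      smul_eq_mul] at e
    rw [show b + -b = 0 by ring, add_zero, add_zero] at e
    rw [neg_neg, neg_zero]
    push_cast at e
    linear_combination e

lemma val_LM (h : Normalized χ) (n : ℤ) :
    χ (Lg n) (Mg (-n)) = 0 ∧ χ (Mg n) (Lg (-n)) = 0 ∧ χ (Yg n) (Yg (-n)) = 0 := by
  refine seqLM (u := fun n => χ (Lg n) (Mg (-n))) (v := fun n => χ (Mg n) (Lg (-n)))
    (g := fun n => χ (Yg n) (Yg (-n))) h.M_one (fun a b => ?_) (fun a b => ?_) n
  · have e := h.cocycle (Lg a) (Lg b) (Mg (-a - b))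
    simp only [bk_LL, bk_LM, map_smul, LinearMap.smul_apply, smul_eq_mul] at e
    rw [show b + (-a - b) = -a by ring, show a + (-a - b) = -b by ring] at e
    rw [neg_neg, show -(a + b) = -a - b by ring]
    push_cast at e
    linear_combination e
  · have e := h.cocycle (Yg a) (Lg b) (Yg (-a - b))
    simp only [bk_LY, bk_YL, bk_YY, map_smul, map_neg, LinearMap.smul_apply, LinearMap.neg_apply,
      smul_eq_mul] at e
    rw [show b + (-a - b) = -a by ring, show a + (-a - b) = -b by ring, add_comm b a] at e
    rw [neg_neg, show -(a + b) = -a - b by ring]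
    push_cast at e
    linear_combination e

lemma val_YM (h : Normalized χ) (n : ℤ) : χ (Yg n) (Mg (-n)) = 0 := by
  have E : ∀ a b : ℤ, -((a : ℂ) + b) * χ (Yg a) (Mg (-a))
      = -(a - b / 2) * χ (Yg (a + b)) (Mg (-a - b)) := fun a b => by
    have e := h.cocycle (Yg a) (Lg b) (Mg (-a - b))
    simp only [bk_LM, bk_YL, bk_YM, map_smul, map_neg, map_zero, LinearMap.smul_apply,
      LinearMap.neg_apply, LinearMap.zero_apply, smul_eq_mul] at e
    rw [show b + (-a - b) = -a by ring, add_comm b a] at e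
    push_cast at e
    linear_combination e
  have h0 : χ (Yg 0) (Mg 0) = 0 := by
    have e := E 1 (-1)
    norm_num at e
    exact e
  by_cases hn : n = 0
  · simpa [hn] using h0
  have e := E 0 n
  rw [neg_zero, h0, zero_add, zero_sub] at e
  apply mul_left_cancel₀ (intCast_ne hn)
  push_cast at e
  linear_combination -2 * e

lemma val_MY (h : Normalized χ) (n : ℤ) : χ (Mg n) (Yg (-n)) = 0 := by
  have E : ∀ a b : ℤ, (-(a : ℂ) - 3 * b / 2) * χ (Mg a) (Yg (-a))
      = -a * χ (Mg (a + b)) (Yg (-a - b)) := fun a b => by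
    have e := h.cocycle (Mg a) (Lg b) (Yg (-a - b))
    simp only [bk_LY, bk_ML, bk_MY, map_smul, map_neg, map_zero, LinearMap.smul_apply,
      LinearMap.neg_apply, LinearMap.zero_apply, smul_eq_mul] at e
    rw [show b + (-a - b) = -a by ring, add_comm b a] at e
    push_cast at e
    linear_combination e
  have h0 : χ (Mg 0) (Yg 0) = 0 := by
    have e := E 0 1
    norm_num at e
    exact e
  by_cases hn : n = 0
  · simpa [hn] using h0
  have e := E n (-n)
  rw [add_neg_cancel, sub_neg_eq_add, neg_add_cancel, h0] at e
  apply mul_left_cancel₀ (intCast_ne hn)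
  push_cast at e
  linear_combination 2 * e

lemma val_MM (h : Normalized χ) (n : ℤ) : χ (Mg n) (Mg (-n)) = 0 := by
  -- `M_{-n}` is a multiple of `[Y_m, Y_{-n-m}]`, and `M_n` commutes with every `Y_k`.
  have E : ∀ m : ℤ, (-(n : ℂ) - 2 * m) * χ (Mg n) (Mg (-n)) = 0 := fun m => by
    have e := h.cocycle (Mg n) (Yg m) (Yg (-n - m))
    simp only [bk_YY, bk_MY, map_smul, map_zero, LinearMap.zero_apply, smul_eq_mul] at e
    rw [show m + (-n - m) = -n by ring] at e
    push_cast at e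
    linear_combination e
  linear_combination (E 0 - E 1) / 2

/-- A normalized cocycle is the multiple of `vir` given by its value at `(L_2, L_{-2})`. -/
lemma eq_smul_vir (h : Normalized χ) : χ = (2 * χ (Lg 2) (Lg (-2))) • vir := by
  refine bilinear_ext fun a b => ?_
  rw [LinearMap.smul_apply, LinearMap.smul_apply, vir_basis, smul_eq_mul]
  by_cases hab : deg a + deg b = 0
  · rcases a with n | n | n <;> rcases b with m | m | m <;>
      obtain rfl : m = -n := by simp only [deg] at hab; lia
    · simp only [basisVec_L, virB, if_true, h.val_LL n]; ring
    · simp [basisVec_L, basisVec_Y, virB, (h.val_LY n).1]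
    · simp [basisVec_L, basisVec_M, virB, (h.val_LM n).1]
    · simp [basisVec_L, basisVec_Y, virB, (h.val_LY n).2]
    · simp [basisVec_Y, virB, (h.val_LM n).2.2]
    · simp [basisVec_Y, basisVec_M, virB, h.val_YM n]
    · simp [basisVec_L, basisVec_M, virB, (h.val_LM n).2.1]
    · simp [basisVec_Y, basisVec_M, virB, h.val_MY n]
    · simp [basisVec_M, virB, h.val_MM n]
  · rw [h.eq_zero_of_deg a b hab]
    rcases a with n | n | n <;> rcases b with m | m | m <;> simp only [virB, mul_zero]
    rw [if_neg (by simp only [deg] at hab; lia), mul_zero]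

end Normalized

/-- `H²_L(𝓛, ℂ) ≅ ℂ`, generated by the class of the Virasoro Leibniz cocycle: every
Leibniz 2-cocycle is a scalar multiple of `vir` plus a coboundary, and `vir` is not a
coboundary. -/
theorem stmt16 :
    (∀ ψ : V →ₗ[ℂ] V →ₗ[ℂ] ℂ, IsLeibnizCocycle ψ →
      ∃ (f : V →ₗ[ℂ] ℂ) (c : ℂ), ∀ x y : V, ψ x y = f (bk x y) + c * vir x y) ∧
    ¬ ∃ f : V →ₗ[ℂ] ℂ, ∀ x y : V, vir x y = f (bk x y) := by
  constructor
  · intro ψ hψ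
    obtain ⟨f, hf⟩ := exists_normalized hψ
    refine ⟨f, 2 * (ψ - bk.compr₂ f) (Lg 2) (Lg (-2)), fun x y => ?_⟩
    have e := congrArg (fun F => F x y) hf.eq_smul_vir
    exact sub_eq_iff_eq_add'.mp e
  · rintro ⟨f, hf⟩
    have e1 := hf (Lg 1) (Lg (-1))
    have e2 := hf (Lg 2) (Lg (-2))
    rw [bk_LL, ← basisVec_L, ← basisVec_L, vir_basis] at e1 e2
    norm_num [virB] at e1 e2
    simp [e1] at e2
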